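/- arXiv:0901.1280 — 2 statements merged into one kernel-verified Lean document; each statement's English description precedes it below -/
import Mathlib

section
/- For any extension ρ_{AA'BB'} of ρ_{AB} (i.e., Tr_{A'B'} ρ_{AA'BB'} = ρ_{AB}), one has I(AA':BB') ≥ 2E_I(ρ_{AB}) + I(A':B'), and consequently for every n-copy broadcast state ρ^{(n)} of ρ_{AB}, I(A^n:B^n)_{ρ^{(n)}} ≥ 2n·E_I(ρ_{AB}); hence I_b^{(∞)}(ρ) ≥ 2E_I(ρ). -/
open scoped BigOperators Kronecker ComplexOrder
open Matrix Filter Topology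

noncomputable section

/-- Shannon entropy (log base 2) of a finitely supported distribution. -/
def shannon {I : Type} [Fintype I] (p : I → ℝ) : ℝ := -∑ i, p i * Real.logb 2 (p i)

/-- `p` is a probability distribution. -/
def IsProbDist {I : Type} [Fintype I] (p : I → ℝ) : Prop :=
  (∀ i, 0 ≤ p i) ∧ ∑ i, p i = 1

/-- First marginal of a joint distribution. -/
def margA {I J : Type} [Fintype J] (p : I × J → ℝ) : I → ℝ := fun i => ∑ j, p (i, j)

/-- Second marginal of a joint distribution. -/
def margB {I J : Type} [Fintype I] (p : I × J → ℝ) : J → ℝ := fun j => ∑ i, p (i, j)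

/-- Classical mutual information of a joint distribution. -/
def classMI {I J : Type} [Fintype I] [Fintype J] (p : I × J → ℝ) : ℝ :=
  shannon (margA p) + shannon (margB p) - shannon p

/-- Kullback-Leibler divergence (log base 2). -/
def klDiv {I : Type} [Fintype I] (p q : I → ℝ) : ℝ := ∑ i, p i * Real.logb 2 (p i / q i)

/-- A density operator: positive semidefinite with unit trace. -/
def IsDensity {n : Type} [Fintype n] (ρ : Matrix n n ℂ) : Prop :=
  ρ.PosSemidef ∧ ρ.trace = 1

/-- Von Neumann entropy (log base 2) via the eigenvalues of a Hermitian matrix. -/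
def vnEntropy {n : Type} [Fintype n] [DecidableEq n] (ρ : Matrix n n ℂ) : ℝ :=
  if h : ρ.IsHermitian then -∑ i, h.eigenvalues i * Real.logb 2 (h.eigenvalues i) else 0

/-- Partial trace over the second tensor factor. -/
def ptraceB {A B : Type} [Fintype B] (ρ : Matrix (A × B) (A × B) ℂ) : Matrix A A ℂ :=
  Matrix.of fun a a' => ∑ b, ρ (a, b) (a', b)

/-- Partial trace over the first tensor factor. -/
def ptraceA {A B : Type} [Fintype A] (ρ : Matrix (A × B) (A × B) ℂ) : Matrix B B ℂ :=
  Matrix.of fun b b' => ∑ a, ρ (a, b) (a, b')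

/-- Quantum mutual information I(A:B) = S(ρ_A) + S(ρ_B) - S(ρ_{AB}). -/
def mutInfo {A B : Type} [Fintype A] [Fintype B] [DecidableEq A] [DecidableEq B]
    (ρ : Matrix (A × B) (A × B) ℂ) : ℝ :=
  vnEntropy (ptraceB ρ) + vnEntropy (ptraceA ρ) - vnEntropy ρ

/-- Tensor product of two bipartite states, with the cut (A₁A₂ : B₁B₂). -/
def tens2 {A₁ B₁ A₂ B₂ : Type}
    (ρ : Matrix (A₁ × B₁) (A₁ × B₁) ℂ) (σ : Matrix (A₂ × B₂) (A₂ × B₂) ℂ) :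
    Matrix ((A₁ × A₂) × (B₁ × B₂)) ((A₁ × A₂) × (B₁ × B₂)) ℂ :=
  Matrix.of fun x y => ρ (x.1.1, x.2.1) (y.1.1, y.2.1) * σ (x.1.2, x.2.2) (y.1.2, y.2.2)

/-- n-fold tensor power of a bipartite state, with the A^n : B^n cut. -/
def tpow {A B : Type} (σ : Matrix (A × B) (A × B) ℂ) (n : ℕ) :
    Matrix ((Fin n → A) × (Fin n → B)) ((Fin n → A) × (Fin n → B)) ℂ :=
  Matrix.of fun x y => ∏ i, σ (x.1 i, x.2 i) (y.1 i, y.2 i)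

/-- Reduced state of the k-th copy (partial trace over all other copies). -/
def copyMarginal {A B : Type} [Fintype A] [Fintype B] [DecidableEq A] [DecidableEq B] {n : ℕ}
    (ρ : Matrix ((Fin n → A) × (Fin n → B)) ((Fin n → A) × (Fin n → B)) ℂ) (k : Fin n) :
    Matrix (A × B) (A × B) ℂ :=
  Matrix.of fun x y => ∑ f : Fin n → A, ∑ g : Fin n → B,
    if f k = x.1 ∧ g k = x.2 then
      ρ (f, g) (Function.update f k y.1, Function.update g k y.2) else 0

/-- `τ` is an n-copy broadcast state of `ρ`. -/
def IsBroadcast {A B : Type} [Fintype A] [Fintype B] [DecidableEq A] [DecidableEq B] (n : ℕ)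
    (τ : Matrix ((Fin n → A) × (Fin n → B)) ((Fin n → A) × (Fin n → B)) ℂ)
    (ρ : Matrix (A × B) (A × B) ℂ) : Prop :=
  IsDensity τ ∧ ∀ k : Fin n, copyMarginal τ k = ρ

/-- n-copy broadcast mutual information (I_b)_n. -/
def Ib {A B : Type} [Fintype A] [Fintype B] [DecidableEq A] [DecidableEq B] (n : ℕ)
    (ρ : Matrix (A × B) (A × B) ℂ) : ℝ :=
  sInf {x | ∃ τ, IsBroadcast n τ ρ ∧ x = mutInfo τ}

/-- Partial trace of a state on (A A' : B B') over the primed (ancilla) systems. -/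
def ptracePrime {A B A' B' : Type} [Fintype A'] [Fintype B']
    (τ : Matrix ((A × A') × (B × B')) ((A × A') × (B × B')) ℂ) :
    Matrix (A × B) (A × B) ℂ :=
  Matrix.of fun x y => ∑ a', ∑ b', τ ((x.1, a'), (x.2, b')) ((y.1, a'), (y.2, b'))

/-- Partial trace of a state on (A A' : B B') over the unprimed systems. -/
def ptraceMain {A B A' B' : Type} [Fintype A] [Fintype B]
    (τ : Matrix ((A × A') × (B × B')) ((A × A') × (B × B')) ℂ) :
    Matrix (A' × B') (A' × B') ℂ :=
  Matrix.of fun x y => ∑ a, ∑ b, τ ((a, x.1), (b, x.2)) ((a, y.1), (b, y.2))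

/-- Conditional entanglement of mutual information (CEMI). -/
def EI {A B : Type} [Fintype A] [Fintype B] [DecidableEq A] [DecidableEq B]
    (ρ : Matrix (A × B) (A × B) ℂ) : ℝ :=
  (1 / 2) * sInf {x | ∃ (dA dB : ℕ)
    (τ : Matrix ((A × Fin dA) × (B × Fin dB)) ((A × Fin dA) × (B × Fin dB)) ℂ),
    IsDensity τ ∧ ptracePrime τ = ρ ∧ x = mutInfo τ - mutInfo (ptraceMain τ)}

/-- Classical squashed entanglement, via the ensemble formula. -/
def EsqC {A B : Type} [Fintype A] [Fintype B] [DecidableEq A] [DecidableEq B]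
    (ρ : Matrix (A × B) (A × B) ℂ) : ℝ :=
  (1 / 2) * sInf {x | ∃ (m : ℕ) (p : Fin m → ℝ) (σ : Fin m → Matrix (A × B) (A × B) ℂ),
    (∀ k, 0 ≤ p k) ∧ (∑ k, p k = 1) ∧ (∀ k, IsDensity (σ k)) ∧
    (∑ k, (p k : ℂ) • σ k = ρ) ∧ x = ∑ k, p k * mutInfo (σ k)}

/-- Separability of a bipartite state. -/
def Separable {A B : Type} [Fintype A] [Fintype B]
    (ρ : Matrix (A × B) (A × B) ℂ) : Prop :=
  ∃ (m : ℕ) (p : Fin m → ℝ) (σA : Fin m → Matrix A A ℂ) (σB : Fin m → Matrix B B ℂ),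
    (∀ k, 0 ≤ p k) ∧ (∑ k, p k = 1) ∧ (∀ k, IsDensity (σA k) ∧ IsDensity (σB k)) ∧
    ρ = ∑ k, (p k : ℂ) • (σA k ⊗ₖ σB k)

/-- A finite POVM. -/
def IsPOVM {A ι : Type} [Fintype A] [Fintype ι] [DecidableEq A]
    (M : ι → Matrix A A ℂ) : Prop :=
  (∀ i, (M i).PosSemidef) ∧ ∑ i, M i = 1

/-- Outcome distribution of a local product measurement. -/
def measProb {A B ι κ : Type} [Fintype A] [Fintype B]
    (M : ι → Matrix A A ℂ) (N : κ → Matrix B B ℂ)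
    (ρ : Matrix (A × B) (A × B) ℂ) : ι × κ → ℝ :=
  fun x => (((M x.1 ⊗ₖ N x.2) * ρ).trace).re

/-- Completeness condition for a family of Kraus operators. -/
def IsKraus {A A' ι : Type} [Fintype A] [Fintype A'] [Fintype ι] [DecidableEq A]
    (K : ι → Matrix A' A ℂ) : Prop :=
  ∑ i, (K i)ᴴ * K i = 1

/-- Action of the product channel Λ_A ⊗ Λ_B (given by Kraus operators) on a bipartite state. -/
def localApply {A B A' B' ι κ : Type} [Fintype A] [Fintype B] [Fintype ι] [Fintype κ]
    (K : ι → Matrix A' A ℂ) (L : κ → Matrix B' B ℂ)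
    (ρ : Matrix (A × B) (A × B) ℂ) : Matrix (A' × B') (A' × B') ℂ :=
  ∑ i, ∑ j, (K i ⊗ₖ L j) * ρ * (K i ⊗ₖ L j)ᴴ

/-- Measured relative entropy distance to separable states (with optimization over local POVMs). -/
def measREE {A B : Type} [Fintype A] [Fintype B] [DecidableEq A] [DecidableEq B]
    (ρ : Matrix (A × B) (A × B) ℂ) : ℝ :=
  sInf {x | ∃ σ : Matrix (A × B) (A × B) ℂ, IsDensity σ ∧ Separable σ ∧
    x = sSup {y | ∃ (m m' : ℕ) (M : Fin m → Matrix A A ℂ) (N : Fin m' → Matrix B B ℂ),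
      IsPOVM M ∧ IsPOVM N ∧ y = klDiv (measProb M N ρ) (measProb M N σ)}}

def Sroot {n : Type} [Fintype n] [DecidableEq n] (M : Matrix n n ℂ) : ℝ :=
  (M.charpoly.roots.map (fun z => Real.negMulLog z.re)).sum

lemma Sroot_eq {n : Type} [Fintype n] [DecidableEq n] {M : Matrix n n ℂ} (h : M.IsHermitian) :
    Sroot M = ∑ i, Real.negMulLog (h.eigenvalues i) := by
  unfold Sroot
  rw [h.roots_charpoly_eq_eigenvalues, Multiset.map_map]
  simp [Function.comp_def]

lemma vn_eq {n : Type} [Fintype n] [DecidableEq n] {M : Matrix n n ℂ} (h : M.IsHermitian) :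
    vnEntropy M = Sroot M / Real.log 2 := by
  rw [Sroot_eq h, vnEntropy, dif_pos h, Finset.sum_div, ← Finset.sum_neg_distrib]
  refine Finset.sum_congr rfl fun i _ => ?_
  simp only [Real.negMulLog, Real.logb]
  ring

lemma Sroot_reindex {n m : Type} [Fintype n] [DecidableEq n] [Fintype m] [DecidableEq m]
    (e : m ≃ n) (M : Matrix n n ℂ) : Sroot (M.submatrix e e) = Sroot M := by
  unfold Sroot
  rw [← Matrix.charpoly_reindex e.symm M]
  rfl

lemma vn_reindex {n m : Type} [Fintype n] [DecidableEq n] [Fintype m] [DecidableEq m]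
    (e : m ≃ n) {M : Matrix n n ℂ} (h : M.IsHermitian) :
    vnEntropy (M.submatrix e e) = vnEntropy M := by
  rw [vn_eq h, vn_eq (h.submatrix e), Sroot_reindex]

lemma Sroot_mul_comm {n m : Type} [Fintype n] [DecidableEq n] [Fintype m] [DecidableEq m]
    (P : Matrix m n ℂ) (Q : Matrix n m ℂ) : Sroot (P * Q) = Sroot (Q * P) := by
  have h := congrArg (fun p => (p.roots.map (fun z : ℂ => Real.negMulLog z.re)).sum)
    (Matrix.charpoly_mul_comm' P Q)
  have h1 : (Polynomial.X ^ Fintype.card n * (P * Q).charpoly : Polynomial ℂ) ≠ 0 :=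
    mul_ne_zero (pow_ne_zero _ Polynomial.X_ne_zero) (Matrix.charpoly_monic _).ne_zero
  have h2 : (Polynomial.X ^ Fintype.card m * (Q * P).charpoly : Polynomial ℂ) ≠ 0 :=
    mul_ne_zero (pow_ne_zero _ Polynomial.X_ne_zero) (Matrix.charpoly_monic _).ne_zero
  simp only [Polynomial.roots_mul h1, Polynomial.roots_mul h2, Multiset.map_add,
    Multiset.sum_add, Polynomial.roots_pow, Polynomial.roots_X] at h
  simpa [Sroot, Multiset.map_nsmul, Multiset.sum_nsmul] using h

lemma spec {n : Type} [Fintype n] [DecidableEq n] {M : Matrix n n ℂ} (h : M.PosSemidef) :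
    ∃ (U : Matrix n n ℂ) (p : n → ℝ), (∀ i, 0 ≤ p i) ∧ Uᴴ * U = 1 ∧ U * Uᴴ = 1 ∧
      M = U * diagonal (fun i => (p i : ℂ)) * Uᴴ ∧ Sroot M = ∑ i, Real.negMulLog (p i) := by
  refine ⟨h.1.eigenvectorUnitary, h.1.eigenvalues, h.eigenvalues_nonneg, ?_, ?_, ?_, Sroot_eq h.1⟩
  · exact Unitary.coe_star_mul_self _
  · exact Unitary.coe_mul_star_self _
  · have := h.1.spectral_theorem
    rw [Unitary.conjStarAlgAut_apply] at this
    exact this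

lemma Sroot_le_diag {n : Type} [Fintype n] [DecidableEq n] {M : Matrix n n ℂ}
    (h : M.PosSemidef) : Sroot M ≤ ∑ i, Real.negMulLog (M i i).re := by
  obtain ⟨U, p, hp, h1, h2, h3, h4⟩ := spec h
  have hr : ∀ i, ∑ k, Complex.normSq (U i k) = 1 := by
    intro i
    have := congrFun (congrFun h2 i) i
    simp only [Matrix.mul_apply, conjTranspose_apply, one_apply_eq, Complex.star_def,
      Complex.mul_conj] at this
    exact_mod_cast this
  have hc : ∀ k, ∑ i, Complex.normSq (U i k) = 1 := by
    intro k
    have := congrFun (congrFun h1 k) k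
    simp only [Matrix.mul_apply, conjTranspose_apply, one_apply_eq, Complex.star_def,
      ← Complex.normSq_eq_conj_mul_self] at this
    exact_mod_cast this
  have hd : ∀ i, (M i i).re = ∑ k, Complex.normSq (U i k) • p k := by
    intro i
    have : M i i = ((∑ k, Complex.normSq (U i k) • p k : ℝ) : ℂ) := by
      rw [h3, Matrix.mul_apply]
      push_cast
      refine Finset.sum_congr rfl fun k _ => ?_
      rw [Matrix.mul_diagonal, conjTranspose_apply, Complex.star_def, smul_eq_mul]
      push_cast
      rw [← Complex.mul_conj]
      ring
    rw [this, Complex.ofReal_re]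
  calc Sroot M = ∑ k, (∑ i, Complex.normSq (U i k)) * Real.negMulLog (p k) := by
        rw [h4]; simp [hc]
    _ = ∑ i, ∑ k, Complex.normSq (U i k) • Real.negMulLog (p k) := by
        simp_rw [Finset.sum_mul]; rw [Finset.sum_comm]; rfl
    _ ≤ _ := by
        refine Finset.sum_le_sum fun i _ => ?_
        rw [hd]
        exact Real.concaveOn_negMulLog.le_map_sum (fun k _ => Complex.normSq_nonneg _) (hr i)
          (fun k _ => hp k)

lemma classical_bd {X : Type} [Fintype X] [Nonempty X] (r : X → ℝ) (hr : ∀ x, 0 ≤ r x) :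
    ∑ x, Real.negMulLog (r x) ≤
      Real.negMulLog (∑ x, r x) + (∑ x, r x) * Real.log (Fintype.card X) := by
  have hd : (0:ℝ) < Fintype.card X := by exact_mod_cast Fintype.card_pos
  have := Real.concaveOn_negMulLog.le_map_sum (t := Finset.univ)
    (w := fun _ : X => (Fintype.card X : ℝ)⁻¹) (p := r) (fun _ _ => by positivity)
    (by simp [hd.ne']) (fun x _ => hr x)
  simp only [smul_eq_mul, ← Finset.mul_sum] at this
  set q := ∑ x, r x
  rw [Real.negMulLog_mul] at this
  rw [inv_mul_le_iff₀ hd] at this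
  refine this.trans (le_of_eq ?_)
  simp only [Real.negMulLog, Real.log_inv]
  field_simp
  ring

lemma classical_bd2 {X Y : Type} [Fintype X] [Fintype Y] [Nonempty X] (r : X × Y → ℝ)
    (hr : ∀ x, 0 ≤ r x) (q : Y → ℝ) (hq : ∀ y, ∑ x, r (x, y) = q y) (h1 : ∑ y, q y = 1) :
    ∑ x, Real.negMulLog (r x) ≤ ∑ y, Real.negMulLog (q y) + Real.log (Fintype.card X) := by
  rw [Fintype.sum_prod_type_right]
  have : Real.log (Fintype.card X) = ∑ y, q y * Real.log (Fintype.card X) := by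
    rw [← Finset.sum_mul, h1, one_mul]
  rw [this, ← Finset.sum_add_distrib]
  refine Finset.sum_le_sum fun y _ => ?_
  have := classical_bd (fun x => r (x, y)) (fun x => hr _)
  simpa only [hq] using this

lemma ptraceA_psd {X Y : Type} [Fintype X] [Fintype Y] {M : Matrix (X × Y) (X × Y) ℂ}
    (h : M.PosSemidef) : (ptraceA M).PosSemidef := by
  have : ptraceA M = ∑ x, M.submatrix (fun y => (x, y)) (fun y => (x, y)) := by
    ext; simp [ptraceA, Matrix.sum_apply]
  rw [this]
  exact posSemidef_sum _ fun x _ => h.submatrix _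

lemma ptraceB_psd {X Y : Type} [Fintype X] [Fintype Y] {M : Matrix (X × Y) (X × Y) ℂ}
    (h : M.PosSemidef) : (ptraceB M).PosSemidef := by
  have : ptraceB M = ∑ y, M.submatrix (fun x => (x, y)) (fun x => (x, y)) := by
    ext; simp [ptraceB, Matrix.sum_apply]
  rw [this]
  exact posSemidef_sum _ fun x _ => h.submatrix _

lemma ptraceA_dens {X Y : Type} [Fintype X] [Fintype Y] {M : Matrix (X × Y) (X × Y) ℂ}
    (h : IsDensity M) : IsDensity (ptraceA M) := by
  refine ⟨ptraceA_psd h.1, ?_⟩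
  rw [← h.2]
  simp [Matrix.trace, ptraceA, Fintype.sum_prod_type_right]

lemma ptraceB_dens {X Y : Type} [Fintype X] [Fintype Y] {M : Matrix (X × Y) (X × Y) ℂ}
    (h : IsDensity M) : IsDensity (ptraceB M) := by
  refine ⟨ptraceB_psd h.1, ?_⟩
  rw [← h.2]
  simp [Matrix.trace, ptraceB, Fintype.sum_prod_type]

lemma trace_spec {n : Type} [Fintype n] [DecidableEq n] {M U : Matrix n n ℂ} {p : n → ℝ}
    (h1 : Uᴴ * U = 1) (h : M = U * diagonal (fun i => (p i : ℂ)) * Uᴴ) (ht : M.trace = 1) :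
    ∑ i, p i = 1 := by
  rw [h, Matrix.trace_mul_comm, ← mul_assoc, h1, one_mul, Matrix.trace_diagonal] at ht
  exact_mod_cast ht

lemma nonempty_X {X Y : Type} [Fintype X] [Fintype Y] {M : Matrix (X × Y) (X × Y) ℂ}
    (h : IsDensity M) : Nonempty X := by
  by_contra hX
  rw [not_nonempty_iff] at hX
  have := h.2
  simp [Matrix.trace] at this

lemma upper {X Y : Type} [Fintype X] [Fintype Y] [DecidableEq X] [DecidableEq Y]
    {M : Matrix (X × Y) (X × Y) ℂ} (h : IsDensity M) :
    Sroot M ≤ Sroot (ptraceA M) + Real.log (Fintype.card X) := by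
  have := nonempty_X h
  obtain ⟨V, q, hq, h1, h2, h3, h4⟩ := spec (ptraceA_psd h.1)
  let W : Matrix (X × Y) (X × Y) ℂ := (1 : Matrix X X ℂ) ⊗ₖ V
  have hW : W * Wᴴ = 1 := by
    simp only [W, conjTranspose_kronecker, ← Matrix.mul_kronecker_mul, h2]
    simp
  have hpsd : (Wᴴ * M * W).PosSemidef := h.1.conjTranspose_mul_mul_same W
  have e : Sroot (Wᴴ * M * W) = Sroot M := by
    rw [Sroot_mul_comm, ← mul_assoc, hW, one_mul]
  rw [← e, h4]
  refine (Sroot_le_diag hpsd).trans ?_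
  refine classical_bd2 _ (fun x => ?_) q (fun j => ?_)
    (trace_spec h1 h3 (ptraceA_dens h).2)
  · exact (Complex.nonneg_iff.1 hpsd.diag_nonneg).1
  · have hh : Vᴴ * ptraceA M * V = diagonal (fun i => (q i : ℂ)) := by
      rw [h3]
      calc _ = (Vᴴ * V) * diagonal (fun i => (q i : ℂ)) * (Vᴴ * V) := by
            simp only [mul_assoc]
        _ = _ := by rw [h1]; simp
    have hj := congrFun (congrFun hh j) j
    rw [diagonal_apply_eq] at hj
    rw [← Complex.re_sum, ← Complex.ofReal_re (q j), ← hj]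
    congr 1
    simp only [W, Matrix.mul_apply, conjTranspose_apply, kronecker_apply, ptraceA, of_apply,
      Fintype.sum_prod_type, one_apply, Finset.sum_mul, Finset.mul_sum]
    simp only [ite_mul, one_mul, zero_mul, apply_ite star, star_zero, mul_ite, mul_zero,
      Finset.sum_ite_irrel, Finset.sum_const_zero, Finset.sum_ite_eq',
      Finset.mem_univ, if_true]
    rw [Finset.sum_comm]
    refine Finset.sum_congr rfl fun y _ => ?_
    rw [Finset.sum_comm]

lemma lower {X Y : Type} [Fintype X] [Fintype Y] [DecidableEq X] [DecidableEq Y]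
    {M : Matrix (X × Y) (X × Y) ℂ} (h : IsDensity M) :
    Sroot (ptraceA M) ≤ Sroot M + Real.log (Fintype.card X) := by
  have := nonempty_X h
  obtain ⟨U, p, hp, h1, h2, h3, h4⟩ := spec h.1
  let W : Matrix Y (X × (X × Y)) ℂ := of fun y k => U (k.1, y) k.2 * (Real.sqrt (p k.2) : ℂ)
  have hs : ∀ k, (Real.sqrt (p k) : ℂ) * (Real.sqrt (p k) : ℂ) = p k := by
    intro k; rw [← Complex.ofReal_mul, Real.mul_self_sqrt (hp k)]
  have e : ptraceA M = W * Wᴴ := by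
    ext y y'
    simp only [ptraceA, of_apply, Matrix.mul_apply, W, conjTranspose_apply]
    rw [Fintype.sum_prod_type]
    refine Finset.sum_congr rfl fun x _ => ?_
    rw [h3, Matrix.mul_apply]
    refine Finset.sum_congr rfl fun k _ => ?_
    rw [Matrix.mul_diagonal, conjTranspose_apply, star_mul', ← hs k]
    simp only [Complex.star_def, Complex.conj_ofReal]
    ring
  have hpsd : (Wᴴ * W).PosSemidef := posSemidef_conjTranspose_mul_self W
  rw [e, Sroot_mul_comm, h4]
  refine (Sroot_le_diag hpsd).trans ?_
  refine classical_bd2 _ (fun x => ?_) p (fun j => ?_) (trace_spec h1 h3 h.2)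
  · exact (Complex.nonneg_iff.1 hpsd.diag_nonneg).1
  · have hj := congrFun (congrFun h1 j) j
    rw [one_apply_eq, Matrix.mul_apply, Fintype.sum_prod_type] at hj
    rw [← Complex.re_sum, ← Complex.ofReal_re (p j), ← mul_one (p j : ℂ), ← hj, Finset.mul_sum]
    congr 1
    refine Finset.sum_congr rfl fun x _ => ?_
    rw [Matrix.mul_apply, Finset.mul_sum]
    refine Finset.sum_congr rfl fun y _ => ?_
    simp only [W, conjTranspose_apply, of_apply, star_mul', Complex.star_def,
      Complex.conj_ofReal]
    rw [← hs j]
    ring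

lemma dens_reindex {n m : Type} [Fintype n] [Fintype m] (e : m ≃ n) {M : Matrix n n ℂ}
    (h : IsDensity M) : IsDensity (M.submatrix e e) := by
  refine ⟨h.1.submatrix _, ?_⟩
  rw [← h.2]
  exact Equiv.sum_comp e (fun i => M i i)

lemma ptraceMain_eq {A B A' B' : Type} [Fintype A] [Fintype B]
    (τ : Matrix ((A × A') × (B × B')) ((A × A') × (B × B')) ℂ) :
    ptraceMain τ = ptraceA (τ.submatrix (Equiv.prodProdProdComm A B A' B')
      (Equiv.prodProdProdComm A B A' B')) := by
  ext x y
  simp [ptraceMain, ptraceA, Fintype.sum_prod_type]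

lemma ptraceMain_dens {A B A' B' : Type} [Fintype A] [Fintype B] [Fintype A'] [Fintype B']
    {τ : Matrix ((A × A') × (B × B')) ((A × A') × (B × B')) ℂ} (h : IsDensity τ) :
    IsDensity (ptraceMain τ) := by
  rw [ptraceMain_eq]
  exact ptraceA_dens (dens_reindex _ h)

lemma mutInfo_bdd {A B A' B' : Type} [Fintype A] [Fintype B] [DecidableEq A] [DecidableEq B]
    [Fintype A'] [Fintype B'] [DecidableEq A'] [DecidableEq B']
    {τ : Matrix ((A × A') × (B × B')) ((A × A') × (B × B')) ℂ} (h : IsDensity τ) :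
    -((Real.log (Fintype.card A) + Real.log (Fintype.card B) + Real.log (Fintype.card (A × B)))
      / Real.log 2) ≤ mutInfo τ - mutInfo (ptraceMain τ) := by
  have hm := ptraceMain_dens h
  have h1 := lower (ptraceB_dens h)
  have h2 := lower (ptraceA_dens h)
  have h3 := upper (dens_reindex (Equiv.prodProdProdComm A B A' B') h)
  rw [← ptraceMain_eq, Sroot_reindex] at h3
  have e1 : ptraceB (ptraceMain τ) = ptraceA (ptraceB τ) := by
    ext x y
    simp only [ptraceMain, ptraceA, ptraceB, of_apply, Fintype.sum_prod_type]
    rw [Finset.sum_comm]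
    refine Finset.sum_congr rfl fun a _ => ?_
    rw [Finset.sum_comm]
  have e2 : ptraceA (ptraceMain τ) = ptraceA (ptraceA τ) := by
    ext x y
    simp only [ptraceMain, ptraceA, of_apply, Fintype.sum_prod_type]
    rw [Finset.sum_congr rfl fun a _ => Finset.sum_comm, Finset.sum_comm]
    refine Finset.sum_congr rfl fun a _ => ?_
    rw [Finset.sum_comm]
  simp only [mutInfo]
  rw [vn_eq h.1.1, vn_eq hm.1.1, e1, e2, vn_eq (ptraceA_dens h).1.1, vn_eq (ptraceB_dens h).1.1,
    vn_eq (ptraceA_dens (ptraceB_dens h)).1.1, vn_eq (ptraceA_dens (ptraceA_dens h)).1.1]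
  have hl : 0 < Real.log 2 := Real.log_pos (by norm_num)
  simp only [← neg_div, ← add_div, ← sub_div]
  gcongr
  linarith

lemma mutInfo_reindex {A B A' B' : Type} [Fintype A] [Fintype B] [DecidableEq A] [DecidableEq B]
    [Fintype A'] [Fintype B'] [DecidableEq A'] [DecidableEq B'] (e : A' ≃ A) (f : B' ≃ B)
    {M : Matrix (A × B) (A × B) ℂ} (h : M.PosSemidef) :
    mutInfo (M.submatrix (e.prodCongr f) (e.prodCongr f)) = mutInfo M := by
  unfold mutInfo
  have e1 : ptraceB (M.submatrix (e.prodCongr f) (e.prodCongr f)) = (ptraceB M).submatrix e e := by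
    ext x y
    exact Equiv.sum_comp f (fun b => M (e x, b) (e y, b))
  have e2 : ptraceA (M.submatrix (e.prodCongr f) (e.prodCongr f)) = (ptraceA M).submatrix f f := by
    ext x y
    exact Equiv.sum_comp e (fun b => M (b, f x) (b, f y))
  rw [e1, e2, vn_reindex _ h.1, vn_reindex _ (ptraceB_psd h).1, vn_reindex _ (ptraceA_psd h).1]

lemma part1 {A B : Type} [Fintype A] [Fintype B] [DecidableEq A] [DecidableEq B]
    (ρ : Matrix (A × B) (A × B) ℂ) (A' B' : Type) [Fintype A'] [Fintype B']
    [DecidableEq A'] [DecidableEq B']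
    (τ : Matrix ((A × A') × (B × B')) ((A × A') × (B × B')) ℂ)
    (h : IsDensity τ) (hτ : ptracePrime τ = ρ) :
    2 * EI ρ + mutInfo (ptraceMain τ) ≤ mutInfo τ := by
  let eA := (Fintype.equivFin A').symm
  let eB := (Fintype.equivFin B').symm
  let e := ((Equiv.refl A).prodCongr eA).prodCongr ((Equiv.refl B).prodCongr eB)
  have key : 2 * EI ρ ≤ mutInfo (τ.submatrix e e) - mutInfo (ptraceMain (τ.submatrix e e)) := by
    unfold EI
    rw [← mul_assoc, show (2:ℝ) * (1/2) = 1 by norm_num, one_mul]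
    refine csInf_le ⟨-((Real.log (Fintype.card A) + Real.log (Fintype.card B) +
      Real.log (Fintype.card (A × B))) / Real.log 2), ?_⟩ ⟨_, _, τ.submatrix e e, dens_reindex e h, ?_, rfl⟩
    · rintro x ⟨dA, dB, σ, hσ, -, rfl⟩
      exact mutInfo_bdd hσ
    · rw [← hτ]
      ext x y
      simp only [ptracePrime, of_apply]
      rw [← Equiv.sum_comp eA]
      refine Finset.sum_congr rfl fun a _ => ?_
      rw [← Equiv.sum_comp eB]
      rfl
  have e1 : ptraceMain (τ.submatrix e e)
      = (ptraceMain τ).submatrix (eA.prodCongr eB) (eA.prodCongr eB) := rfl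
  rw [e1, mutInfo_reindex _ _ (ptraceMain_dens h).1, mutInfo_reindex _ _ h.1] at key
  linarith

lemma vn_unique {n : Type} [Fintype n] [DecidableEq n] [Unique n] {M : Matrix n n ℂ}
    (h : IsDensity M) : vnEntropy M = 0 := by
  obtain ⟨U, p, hp, h1, h2, h3, h4⟩ := spec h.1
  have := trace_spec h1 h3 h.2
  rw [vn_eq h.1.1, h4]
  simp at this
  simp [this]

lemma part2 {A B : Type} [Fintype A] [Fintype B] [DecidableEq A] [DecidableEq B]
    (ρ : Matrix (A × B) (A × B) ℂ) (n : ℕ) :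
    ∀ (τ : Matrix ((Fin n → A) × (Fin n → B)) ((Fin n → A) × (Fin n → B)) ℂ),
        IsBroadcast n τ ρ → 2 * n * EI ρ ≤ mutInfo τ := by
  induction n with
  | zero =>
    intro τ h
    let _ : Unique ((Fin 0 → A) × (Fin 0 → B)) :=
      { default := (default, default), uniq := fun _ => Subsingleton.elim _ _ }
    unfold mutInfo
    rw [vn_unique h.1, vn_unique (ptraceA_dens h.1), vn_unique (ptraceB_dens h.1)]
    simp
  | succ n ih =>
    intro τ h
    let eA : A × (Fin n → A) ≃ (Fin (n+1) → A) := Fin.consEquiv (fun _ => A)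
    let eB : B × (Fin n → B) ≃ (Fin (n+1) → B) := Fin.consEquiv (fun _ => B)
    let σ := τ.submatrix (eA.prodCongr eB) (eA.prodCongr eB)
    have hσ : IsDensity σ := dens_reindex _ h.1
    have h1 : ptracePrime σ = ρ := by
      rw [← h.2 0]
      ext x y
      simp only [copyMarginal, of_apply]
      rw [← Equiv.sum_comp eA, Fintype.sum_prod_type]
      simp_rw [← Equiv.sum_comp eB, Fintype.sum_prod_type]
      simp [eA, eB, Fin.consEquiv, ptracePrime, σ, ite_and, Finset.sum_ite_irrel]
    have h2 : IsBroadcast n (ptraceMain σ) ρ := by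
      refine ⟨ptraceMain_dens hσ, fun k => ?_⟩
      rw [← h.2 k.succ]
      ext x y
      simp only [copyMarginal, of_apply]
      rw [← Equiv.sum_comp eA, Fintype.sum_prod_type_right]
      refine Finset.sum_congr rfl fun f _ => ?_
      simp_rw [← Equiv.sum_comp eB, Fintype.sum_prod_type_right]
      rw [Finset.sum_comm]
      refine Finset.sum_congr rfl fun g _ => ?_
      simp only [eA, eB, Fin.consEquiv, ptraceMain, σ, of_apply, Equiv.coe_fn_mk, Fin.cons_succ,
        submatrix_apply, Equiv.prodCongr_apply, Prod.map, Finset.sum_ite_irrel,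
        Finset.sum_const_zero, Fin.cons_update]
    have h3 := part1 ρ _ _ σ hσ h1
    have h4 := ih _ h2
    have h5 : mutInfo σ = mutInfo τ := mutInfo_reindex _ _ h.1.1
    push_cast
    linarith

lemma sum_prod_pi {A B : Type} [Fintype A] [Fintype B] [DecidableEq A] [DecidableEq B] (n : ℕ)
    (F : Fin n → A × B → ℂ) :
    ∑ f : Fin n → A, ∑ g : Fin n → B, ∏ i, F i (f i, g i) = ∏ i, ∑ z, F i z := by
  rw [Finset.prod_univ_sum, Fintype.piFinset_univ, ← Fintype.sum_prod_type',
    ← Equiv.sum_comp (Equiv.arrowProdEquivProdArrow (Fin n) (fun _ => A) (fun _ => B))]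
  rfl

lemma tpow_psd {A B : Type} [Fintype A] [Fintype B] [DecidableEq A] [DecidableEq B] (n : ℕ)
    {ρ : Matrix (A × B) (A × B) ℂ} (hρ : ρ.PosSemidef) : (tpow ρ n).PosSemidef := by
  have key : ∀ s : Finset (Fin n), (of fun x y : (Fin n → A) × (Fin n → B) =>
      ∏ i ∈ s, ρ (x.1 i, x.2 i) (y.1 i, y.2 i)).PosSemidef := by
    intro s
    induction s using Finset.induction_on with
    | empty =>
      convert posSemidef_vecMulVec_self_star (fun _ : (Fin n → A) × (Fin n → B) => (1:ℂ))
        using 1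
      ext x y
      simp [vecMulVec_apply]
    | insert a s ha ih =>
      have h1 := (hρ.submatrix (fun x : (Fin n → A) × (Fin n → B) => (x.1 a, x.2 a))).hadamard ih
      have h2 : (of fun x y : (Fin n → A) × (Fin n → B) =>
          ∏ i ∈ insert a s, ρ (x.1 i, x.2 i) (y.1 i, y.2 i)) =
          (ρ.submatrix (fun x : (Fin n → A) × (Fin n → B) => (x.1 a, x.2 a))
            (fun x : (Fin n → A) × (Fin n → B) => (x.1 a, x.2 a))) ⊙
          (of fun x y : (Fin n → A) × (Fin n → B) =>
            ∏ i ∈ s, ρ (x.1 i, x.2 i) (y.1 i, y.2 i)) := by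
        ext x y
        simp [Finset.prod_insert ha]
      rw [h2]
      exact h1
  exact key Finset.univ

lemma tpow_broadcast {A B : Type} [Fintype A] [Fintype B] [DecidableEq A] [DecidableEq B] (n : ℕ)
    {ρ : Matrix (A × B) (A × B) ℂ} (hρ : IsDensity ρ) : IsBroadcast n (tpow ρ n) ρ := by
  refine ⟨⟨tpow_psd n hρ.1, ?_⟩, fun k => ?_⟩
  · have := sum_prod_pi n (fun _ z => ρ z z)
    have h1 : ∑ z, ρ z z = 1 := hρ.2
    rw [h1] at this
    simpa [Matrix.trace, tpow, Fintype.sum_prod_type] using this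
  · ext x y
    have := sum_prod_pi n (fun i z => if i = k then (if z = x then ρ z y else 0) else ρ z z)
    have h1 : ∑ z, ρ z z = 1 := hρ.2
    have h2 : ∀ i, (∑ z, if i = k then (if z = x then ρ z y else 0) else ρ z z)
        = if i = k then ρ x y else 1 := by
      intro i
      split_ifs
      · simp
      · exact h1
    simp only [h2, Finset.prod_ite_eq', Finset.mem_univ, if_true] at this
    rw [← this]
    simp only [copyMarginal, of_apply, tpow]
    refine Finset.sum_congr rfl fun f _ => Finset.sum_congr rfl fun g _ => ?_
    split_ifs with hc
    · refine Finset.prod_congr rfl fun i _ => ?_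
      by_cases hi : i = k
      · subst hi
        simp [hc.1, hc.2]
      · simp [hi]
    · symm
      apply Finset.prod_eq_zero (Finset.mem_univ k)
      rw [if_pos rfl, if_neg]
      rintro rfl
      exact hc ⟨rfl, rfl⟩

/-- for every extension, I(AA':BB') ≥ 2E_I(ρ) + I(A':B');
consequently every n-copy broadcast state has I(A^n:B^n) ≥ 2n·E_I(ρ), and
hence I_b^{(∞)}(ρ) ≥ 2E_I(ρ). -/
theorem stmt_15 {A B : Type} [Fintype A] [Fintype B] [DecidableEq A] [DecidableEq B]
    (ρ : Matrix (A × B) (A × B) ℂ) (hρ : IsDensity ρ) :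
    (∀ (A' B' : Type) (_ : Fintype A') (_ : Fintype B')
        (_ : DecidableEq A') (_ : DecidableEq B')
        (τ : Matrix ((A × A') × (B × B')) ((A × A') × (B × B')) ℂ),
        IsDensity τ → ptracePrime τ = ρ →
        2 * EI ρ + mutInfo (ptraceMain τ) ≤ mutInfo τ) ∧
    (∀ (n : ℕ) (τ : Matrix ((Fin n → A) × (Fin n → B)) ((Fin n → A) × (Fin n → B)) ℂ),
        IsBroadcast n τ ρ → 2 * n * EI ρ ≤ mutInfo τ) ∧
    (∀ L : ℝ, Tendsto (fun n : ℕ => Ib n ρ / n) atTop (nhds L) → 2 * EI ρ ≤ L) := by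
  refine ⟨fun A' B' _ _ _ _ τ h hτ => part1 ρ A' B' τ h hτ, fun n => part2 ρ n, fun L hL => ?_⟩
  refine ge_of_tendsto hL ?_
  filter_upwards [eventually_gt_atTop 0] with n hn
  have hn' : (0:ℝ) < n := by exact_mod_cast hn
  rw [le_div_iff₀ hn']
  refine le_csInf ⟨_, tpow ρ n, tpow_broadcast n hρ, rfl⟩ ?_
  rintro x ⟨τ, hτ, rfl⟩
  have := part2 ρ n τ hτ
  linarith

end
end

section
/- Classical squashed entanglement admits the ensemble formula implying the upper bound: for any mixed ensemble {(p_k, ρ^k_{AB})} of ρ_{AB}, (I_b)_n(ρ_{AB}) ≤ n·∑_k p_k I(ρ^k_{AB}) + S({p_k}); hence I_b^{(∞)}(ρ_{AB}) ≤ 2E^C_{sq}(ρ_{AB}) where 2E^C_{sq}(ρ) = min over ensembles of ∑_k p_k I(ρ^k). -/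
open scoped BigOperators Kronecker ComplexOrder
open Matrix Filter Topology

noncomputable section

set_option linter.unusedSectionVars false
set_option linter.unusedSimpArgs false

def IsRep (f : ℝ → ℝ) (c D : ℝ) : Prop :=
  ∃ F : ℝ → ℝ, F 0 = 0 ∧ (∀ t, 0 ≤ t → HasDerivAt F (f t) t) ∧
    Tendsto (fun t => F t - c * Real.log (1 + t)) atTop (nhds D)

lemma IsRep.le {f g : ℝ → ℝ} {c D E : ℝ} (hf : IsRep f c D) (hg : IsRep g c E)
    (h : ∀ t, 0 ≤ t → f t ≤ g t) : D ≤ E := by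
  obtain ⟨F, hF0, hF, hFl⟩ := hf
  obtain ⟨G, hG0, hG, hGl⟩ := hg
  have hm : MonotoneOn (fun t => G t - F t) (Set.Ici 0) := by
    apply monotoneOn_of_deriv_nonneg (convex_Ici 0)
    · intro t ht
      exact ((hG t ht).sub (hF t ht)).continuousAt.continuousWithinAt
    · intro t ht
      rw [interior_Ici] at ht
      exact ((hG t (le_of_lt ht)).sub (hF t (le_of_lt ht))).differentiableAt.differentiableWithinAt
    · intro t ht
      rw [interior_Ici] at ht
      have := ((hG t (le_of_lt ht)).sub (hF t (le_of_lt ht))).deriv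
      have h2 := h t (le_of_lt ht)
      change 0 ≤ deriv (G - F) t
      rw [this]; linarith
  refine le_of_tendsto_of_tendsto hFl hGl ?_
  filter_upwards [eventually_ge_atTop 0] with t ht
  have := hm (Set.mem_Ici.2 le_rfl) (Set.mem_Ici.2 ht) ht
  simp only [hF0, hG0] at this
  linarith

lemma IsRep.zero : IsRep (fun _ => 0) 0 0 :=
  ⟨fun _ => 0, rfl, fun t _ => hasDerivAt_const t 0, by simp⟩

lemma IsRep.add {f g : ℝ → ℝ} {c d D E : ℝ} (hf : IsRep f c D) (hg : IsRep g d E) :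
    IsRep (fun t => f t + g t) (c + d) (D + E) := by
  obtain ⟨F, hF0, hF, hFl⟩ := hf
  obtain ⟨G, hG0, hG, hGl⟩ := hg
  refine ⟨fun t => F t + G t, by simp [hF0, hG0], fun t ht => (hF t ht).add (hG t ht), ?_⟩
  refine (hFl.add hGl).congr fun t => ?_
  ring

lemma IsRep.smul {f : ℝ → ℝ} {c D : ℝ} (w : ℝ) (hf : IsRep f c D) :
    IsRep (fun t => w * f t) (w * c) (w * D) := by
  obtain ⟨F, hF0, hF, hFl⟩ := hf
  refine ⟨fun t => w * F t, by simp [hF0], fun t ht => (hF t ht).const_mul w, ?_⟩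
  refine (hFl.const_mul w).congr fun t => ?_
  ring

lemma IsRep.sum {ι : Type} (s : Finset ι) {f : ι → ℝ → ℝ} {c D : ι → ℝ}
    (h : ∀ i ∈ s, IsRep (f i) (c i) (D i)) :
    IsRep (fun t => ∑ i ∈ s, f i t) (∑ i ∈ s, c i) (∑ i ∈ s, D i) := by
  classical
  induction s using Finset.induction_on with
  | empty => simpa using IsRep.zero
  | insert a s ha ih =>
    simp only [Finset.sum_insert ha]
    exact (h a (by simp)).add (ih fun i hi => h i (by simp [hi]))

lemma IsRep.base {r s : ℝ} (hr : 0 < r) (hs : 0 < s) :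
    IsRep (fun t => r ^ 2 / (s + t * r)) r (r * (Real.log r - Real.log s)) := by
  refine ⟨fun t => r * (Real.log (s + t * r) - Real.log s), by simp, fun t ht => ?_, ?_⟩
  · have hp : s + t * r ≠ 0 := by positivity
    have h1 : HasDerivAt (fun t : ℝ => s + t * r) r t := by
      simpa using ((hasDerivAt_id t).mul_const r).const_add s
    have h2 := ((h1.log hp).sub_const (Real.log s)).const_mul r
    refine h2.congr_deriv ?_
    simp only [pow_two, mul_div_assoc]
  · have h1 : Tendsto (fun t : ℝ => r + (s - r) * (1 + t)⁻¹) atTop (nhds (r + (s - r) * 0)) := by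
      refine (Tendsto.const_mul _ ?_).const_add _
      exact tendsto_inv_atTop_zero.comp (tendsto_atTop_add_const_left _ _ tendsto_id)
    rw [mul_zero, add_zero] at h1
    have h2 := ((h1.log hr.ne').sub_const (Real.log s)).const_mul r
    refine h2.congr' ?_
    filter_upwards [eventually_ge_atTop 0] with t ht
    have hp : s + t * r ≠ 0 := by positivity
    have h1t : (1 + t) ≠ 0 := by positivity
    have : r + (s - r) * (1 + t)⁻¹ = (s + t * r) / (1 + t) := by field_simp; ring
    rw [this, Real.log_div hp h1t]
    ring

lemma IsRep.term {w r s : ℝ} (hr : 0 ≤ r) (hs : 0 ≤ s) (h : s = 0 → w * r = 0) :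
    IsRep (fun t => w * (r ^ 2 / (s + t * r))) (w * r) (w * (r * (Real.log r - Real.log s))) := by
  rcases hr.eq_or_lt with hr0 | hr0
  · subst hr0
    simpa using IsRep.zero
  rcases hs.eq_or_lt with hs0 | hs0
  · have hw : w = 0 := by
      rcases mul_eq_zero.1 (h hs0.symm) with h | h
      · exact h
      · exact absurd h hr0.ne'
    subst hw
    simpa using IsRep.zero
  exact (IsRep.base hr0 hs0).smul w

/-- Unitary diagonalization. -/
structure Diag {n : Type} [Fintype n] [DecidableEq n] (ρ U : Matrix n n ℂ) (d : n → ℝ) : Prop where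
  u1 : Uᴴ * U = 1
  u2 : U * Uᴴ = 1
  eq : ρ = U * diagonal (fun i => (d i : ℂ)) * Uᴴ

section
variable {n : Type} [Fintype n] [DecidableEq n]

lemma Diag.of_herm {ρ : Matrix n n ℂ} (h : ρ.IsHermitian) :
    Diag ρ (h.eigenvectorUnitary : Matrix n n ℂ) h.eigenvalues := by
  refine ⟨?_, ?_, ?_⟩
  · exact Unitary.coe_star_mul_self h.eigenvectorUnitary
  · exact Unitary.coe_mul_star_self h.eigenvectorUnitary
  · conv_lhs => rw [h.spectral_theorem, Unitary.conjStarAlgAut_apply]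
    rfl

lemma Diag.conj {ρ U : Matrix n n ℂ} {d : n → ℝ} (h : Diag ρ U d) :
    Uᴴ * ρ * U = diagonal (fun i => (d i : ℂ)) := by
  rw [h.eq]
  calc _ = (Uᴴ * U) * diagonal (fun i => (d i : ℂ)) * (Uᴴ * U) := by simp only [Matrix.mul_assoc]
    _ = _ := by rw [h.u1]; simp

lemma Diag.herm {ρ U : Matrix n n ℂ} {d : n → ℝ} (h : Diag ρ U d) : ρ.IsHermitian := by
  rw [h.eq]
  unfold Matrix.IsHermitian
  simp only [conjTranspose_mul, conjTranspose_conjTranspose, diagonal_conjTranspose, Matrix.mul_assoc]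
  congr 3
  ext i
  simp

lemma Diag.nonneg {ρ U : Matrix n n ℂ} {d : n → ℝ} (h : Diag ρ U d) (hp : ρ.PosSemidef) (i : n) :
    0 ≤ d i := by
  have := hp.conjTranspose_mul_mul_same U
  rw [h.conj, posSemidef_diagonal_iff] at this
  exact_mod_cast this i

lemma Diag.psd {ρ U : Matrix n n ℂ} {d : n → ℝ} (h : Diag ρ U d) (hd : ∀ i, 0 ≤ d i) :
    ρ.PosSemidef := by
  rw [h.eq]
  apply PosSemidef.mul_mul_conjTranspose_same
  rw [posSemidef_diagonal_iff]
  intro i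
  exact_mod_cast hd i

lemma Diag.trace {ρ U : Matrix n n ℂ} {d : n → ℝ} (h : Diag ρ U d) :
    ρ.trace = ((∑ i, d i : ℝ) : ℂ) := by
  rw [h.eq, Matrix.trace_mul_comm, ← Matrix.mul_assoc, h.u1]
  simp [Matrix.trace_diagonal]

lemma Diag.sum_eq_one {ρ U : Matrix n n ℂ} {d : n → ℝ} (h : Diag ρ U d) (hp : IsDensity ρ) :
    ∑ i, d i = 1 := by
  have := h.trace
  rw [hp.2] at this
  exact_mod_cast this.symm

lemma Diag.charpoly {ρ U : Matrix n n ℂ} {d : n → ℝ} (h : Diag ρ U d) :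
    ρ.charpoly = ∏ i, (Polynomial.X - Polynomial.C (d i : ℂ)) := by
  rw [h.eq, Matrix.charpoly_mul_comm, ← Matrix.mul_assoc, h.u1, Matrix.one_mul, charpoly_diagonal]

lemma sum_of_charpoly {n : Type} [Fintype n] {m : Type} [Fintype m] {d : n → ℝ} {e : m → ℝ} (f : ℝ → ℝ)
    (h : ∏ i, (Polynomial.X - Polynomial.C (d i : ℂ)) = ∏ i, (Polynomial.X - Polynomial.C (e i : ℂ))) :
    ∑ i, f (d i) = ∑ i, f (e i) := by
  have key : ∀ {k : Type} [Fintype k] (a : k → ℝ),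
      (∏ i, (Polynomial.X - Polynomial.C (a i : ℂ))).roots
        = Multiset.map (fun i => (a i : ℂ)) Finset.univ.val := by
    intro k _ a
    rw [show (∏ i, (Polynomial.X - Polynomial.C (a i : ℂ))) =
      (Multiset.map (fun z : ℂ => Polynomial.X - Polynomial.C z)
        (Multiset.map (fun i => (a i : ℂ)) Finset.univ.val)).prod by
        rw [Multiset.map_map]; rfl]
    rw [Polynomial.roots_multiset_prod_X_sub_C]
  have h2 := congrArg Polynomial.roots h
  rw [key, key] at h2
  have h3 := congrArg (fun s => (Multiset.map (fun z : ℂ => f z.re) s).sum) h2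
  simp only [Multiset.map_map] at h3
  exact h3

lemma vnEntropy_of_charpoly {ρ : Matrix n n ℂ} (hρ : ρ.IsHermitian) {m : Type} [Fintype m]
    {e : m → ℝ} (h : ρ.charpoly = ∏ i, (Polynomial.X - Polynomial.C (e i : ℂ))) :
    vnEntropy ρ = -∑ i, e i * Real.logb 2 (e i) := by
  unfold vnEntropy
  rw [dif_pos hρ]
  congr 1
  apply sum_of_charpoly (fun x => x * Real.logb 2 x)
  rw [← (Diag.of_herm hρ).charpoly, h]

lemma Diag.ent {ρ U : Matrix n n ℂ} {d : n → ℝ} (h : Diag ρ U d) :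
    vnEntropy ρ = -∑ i, d i * Real.logb 2 (d i) :=
  vnEntropy_of_charpoly h.herm h.charpoly

lemma Diag.ent' {ρ U : Matrix n n ℂ} {d : n → ℝ} (h : Diag ρ U d) :
    ∑ i, d i * Real.log (d i) = -(Real.log 2 * vnEntropy ρ) := by
  have h2 : Real.log 2 ≠ 0 := (Real.log_pos (by norm_num)).ne'
  rw [h.ent, mul_neg, neg_neg, Finset.mul_sum]
  refine Finset.sum_congr rfl fun i _ => ?_
  unfold Real.logb
  field_simp

/-- variational functional -/
def Vf (t : ℝ) (X ρ σ : Matrix n n ℂ) : ℝ :=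
  2 * (trace (Xᴴ * ρ)).re - (trace (Xᴴ * σ * X)).re - t * (trace (X * ρ * Xᴴ)).re

lemma Vf_eq {ρ σ V U : Matrix n n ℂ} {r s : n → ℝ} (hρ : Diag ρ V r) (hσ : Diag σ U s) (t : ℝ)
    (Y : Matrix n n ℂ) :
    Vf t (U * Y * Vᴴ) ρ σ = ∑ j, ∑ i, (2 * ((star (Y j i) * (Uᴴ * V) j i).re * r i)
      - (s j + t * r i) * Complex.normSq (Y j i)) := by
  have e1 : trace ((U * Y * Vᴴ)ᴴ * ρ) = trace (Yᴴ * ((Uᴴ * V) * diagonal (fun i => (r i : ℂ)))) := by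
    rw [hρ.eq]
    simp only [conjTranspose_mul, conjTranspose_conjTranspose]
    rw [Matrix.trace_mul_comm]
    simp only [Matrix.mul_assoc]
    rw [← Matrix.mul_assoc Vᴴ V, hρ.u1, Matrix.one_mul, Matrix.trace_mul_comm]
    simp only [Matrix.mul_assoc]
    rw [Matrix.trace_mul_comm]
    simp only [Matrix.mul_assoc]
  have e2 : trace ((U * Y * Vᴴ)ᴴ * σ * (U * Y * Vᴴ))
      = trace (Yᴴ * (diagonal (fun i => (s i : ℂ)) * Y)) := by
    rw [← hσ.conj]
    simp only [conjTranspose_mul, conjTranspose_conjTranspose]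
    simp only [Matrix.mul_assoc]
    rw [Matrix.trace_mul_comm]
    simp only [Matrix.mul_assoc]
    rw [hρ.u1, Matrix.mul_one]
  have e3 : trace ((U * Y * Vᴴ) * ρ * (U * Y * Vᴴ)ᴴ)
      = trace (Yᴴ * (Y * diagonal (fun i => (r i : ℂ)))) := by
    rw [← hρ.conj]
    simp only [conjTranspose_mul, conjTranspose_conjTranspose]
    simp only [Matrix.mul_assoc]
    rw [Matrix.trace_mul_comm]
    simp only [Matrix.mul_assoc]
    rw [hσ.u1, Matrix.mul_one]
    rw [Matrix.trace_mul_comm Yᴴ]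
    simp only [Matrix.mul_assoc]
  have tr : ∀ M : Matrix n n ℂ, trace (Yᴴ * M) = ∑ j, ∑ i, star (Y j i) * M j i := by
    intro M
    rw [Finset.sum_comm]
    simp [Matrix.trace, Matrix.mul_apply]
  unfold Vf
  rw [e1, e2, e3, tr, tr, tr]
  simp only [Complex.re_sum, Finset.mul_sum, ← Finset.sum_sub_distrib]
  refine Finset.sum_congr rfl fun j _ => Finset.sum_congr rfl fun i _ => ?_
  simp only [Matrix.mul_diagonal, Matrix.diagonal_mul, Complex.normSq_apply]
  generalize (Uᴴ * V) j i = w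
  simp
  ring

lemma entry_le {w y : ℂ} {r s t : ℝ} (hr : 0 ≤ r) (hs : 0 ≤ s) (ht : 0 ≤ t)
    (h : s = 0 → Complex.normSq w * r = 0) :
    2 * ((star y * w).re * r) - (s + t * r) * Complex.normSq y
      ≤ Complex.normSq w * (r ^ 2 / (s + t * r)) := by
  have hq : 0 ≤ s + t * r := by positivity
  rcases hq.eq_or_lt with h0 | h0
  · have hs0 : s = 0 := by nlinarith [mul_nonneg ht hr]
    rcases mul_eq_zero.1 (h hs0) with h1 | h1
    · rw [Complex.normSq_eq_zero] at h1
      subst h1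
      simp [← h0]
    · subst h1
      simp [hs0]
  · rw [← mul_div_assoc, le_div_iff₀ h0]
    generalize s + t * r = q at *
    simp only [Complex.normSq_apply, Complex.mul_re, Complex.star_def, Complex.conj_re, Complex.conj_im]
    nlinarith [sq_nonneg (q * y.re - r * w.re), sq_nonneg (q * y.im - r * w.im)]

lemma entry_eq {w : ℂ} {r s t : ℝ} (hr : 0 ≤ r) (hs : 0 ≤ s) (ht : 0 ≤ t)
    (_h : s = 0 → Complex.normSq w * r = 0) :
    2 * ((star (w * ((r / (s + t * r) : ℝ) : ℂ)) * w).re * r)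
      - (s + t * r) * Complex.normSq (w * ((r / (s + t * r) : ℝ) : ℂ))
      = Complex.normSq w * (r ^ 2 / (s + t * r)) := by
  have hq : 0 ≤ s + t * r := by positivity
  have e : (star (w * ((r / (s + t * r) : ℝ) : ℂ)) * w).re
      = Complex.normSq w * (r / (s + t * r)) := by
    generalize (r / (s + t * r)) = q
    simp [Complex.normSq_apply]
    ring
  rw [e, Complex.normSq_mul, Complex.normSq_ofReal]
  rcases hq.eq_or_lt with h0 | h0
  · simp [← h0]
  · field_simp
    ring

lemma q_eq {ρ V : Matrix n n ℂ} {r : n → ℝ} (hρ : Diag ρ V r) (U : Matrix n n ℂ) (j : n) :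
    ((Uᴴ * ρ * U) j j).re = ∑ i, Complex.normSq ((Uᴴ * V) j i) * r i := by
  have : Uᴴ * ρ * U = (Uᴴ * V) * diagonal (fun i => (r i : ℂ)) * (Uᴴ * V)ᴴ := by
    conv_lhs => rw [hρ.eq]
    simp only [conjTranspose_mul, conjTranspose_conjTranspose, Matrix.mul_assoc]
  rw [this, Matrix.mul_apply, Complex.re_sum]
  refine Finset.sum_congr rfl fun i _ => ?_
  rw [Matrix.mul_diagonal, conjTranspose_apply]
  generalize (Uᴴ * V) j i = w
  simp [Complex.normSq_apply]
  ring

lemma exists_rep {ρ σ V U : Matrix n n ℂ} {r s : n → ℝ} (hρ : Diag ρ V r) (hσ : Diag σ U s)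
    (hr : ∀ i, 0 ≤ r i) (hs : ∀ i, 0 ≤ s i)
    (hk : ∀ j, s j = 0 → ((Uᴴ * ρ * U) j j).re = 0) :
    ∃ f, IsRep f (∑ i, r i)
        (∑ i, r i * Real.log (r i) - ∑ j, ((Uᴴ * ρ * U) j j).re * Real.log (s j)) ∧
      ∀ t, 0 ≤ t → (∀ X, Vf t X ρ σ ≤ f t) ∧ ∃ X, Vf t X ρ σ = f t := by
  have hk' : ∀ j i, s j = 0 → Complex.normSq ((Uᴴ * V) j i) * r i = 0 := by
    intro j i h0
    have := hk j h0
    rw [q_eq hρ, Finset.sum_eq_zero_iff_of_nonneg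
      (fun i _ => mul_nonneg (Complex.normSq_nonneg _) (hr i))] at this
    exact this i (Finset.mem_univ i)
  have hcol : ∀ i, ∑ j, Complex.normSq ((Uᴴ * V) j i) = 1 := by
    intro i
    have h1 : (Uᴴ * V)ᴴ * (Uᴴ * V) = 1 := by
      rw [conjTranspose_mul, conjTranspose_conjTranspose, Matrix.mul_assoc, ← Matrix.mul_assoc U,
        hσ.u2, Matrix.one_mul, hρ.u1]
    have h2 := congrArg Complex.re (congrFun (congrFun h1 i) i)
    rw [Matrix.mul_apply, Complex.re_sum] at h2
    simp only [one_apply_eq, Complex.one_re] at h2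
    rw [← h2]
    refine Finset.sum_congr rfl fun j _ => ?_
    rw [conjTranspose_apply]
    generalize (Uᴴ * V) j i = w
    simp [Complex.normSq_apply]
  refine ⟨fun t => ∑ j, ∑ i, Complex.normSq ((Uᴴ * V) j i) * (r i ^ 2 / (s j + t * r i)), ?_, ?_⟩
  · have h := IsRep.sum Finset.univ fun j _ => IsRep.sum Finset.univ fun i _ =>
      IsRep.term (w := Complex.normSq ((Uᴴ * V) j i)) (hr i) (hs j) (hk' j i)
    convert h using 1
    · rw [Finset.sum_comm]
      refine Finset.sum_congr rfl fun i _ => ?_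
      rw [← Finset.sum_mul, hcol, one_mul]
    · simp only [mul_sub, Finset.sum_sub_distrib]
      congr 1
      · rw [Finset.sum_comm]
        refine Finset.sum_congr rfl fun i _ => ?_
        rw [← Finset.sum_mul, hcol, one_mul]
      · refine Finset.sum_congr rfl fun j _ => ?_
        rw [q_eq hρ, Finset.sum_mul]
        refine Finset.sum_congr rfl fun i _ => ?_
        ring
  · intro t ht
    constructor
    · intro X
      have hX : X = U * (Uᴴ * X * V) * Vᴴ := by
        calc X = (U * Uᴴ) * X * (V * Vᴴ) := by rw [hσ.u2, hρ.u2]; simp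
          _ = _ := by simp only [Matrix.mul_assoc]
      rw [hX, Vf_eq hρ hσ]
      exact Finset.sum_le_sum fun j _ => Finset.sum_le_sum fun i _ =>
        entry_le (hr i) (hs j) ht (hk' j i)
    · refine ⟨U * (Matrix.of fun j i => (Uᴴ * V) j i * ((r i / (s j + t * r i) : ℝ) : ℂ)) * Vᴴ, ?_⟩
      rw [Vf_eq hρ hσ]
      exact Finset.sum_congr rfl fun j _ => Finset.sum_congr rfl fun i _ =>
        entry_eq (hr i) (hs j) ht (hk' j i)

end
section
variable {n : Type} [Fintype n] [DecidableEq n]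

lemma isDensity_sum {ι : Type} [Fintype ι] {p : ι → ℝ} {ω : ι → Matrix n n ℂ}
    (hp : ∀ k, 0 ≤ p k) (h1 : ∑ k, p k = 1) (hω : ∀ k, IsDensity (ω k)) :
    IsDensity (∑ k, (p k : ℂ) • ω k) := by
  constructor
  · refine posSemidef_sum _ fun k _ => (hω k).1.smul ?_
    exact_mod_cast hp k
  · rw [trace_sum]
    simp only [trace_smul, (hω _).2, smul_eq_mul, mul_one]
    exact_mod_cast h1

lemma Vf_sum {ι : Type} [Fintype ι] (p : ι → ℝ) (ρ σ : ι → Matrix n n ℂ) (t : ℝ)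
    (X : Matrix n n ℂ) :
    Vf t X (∑ k, (p k : ℂ) • ρ k) (∑ k, (p k : ℂ) • σ k) = ∑ k, p k * Vf t X (ρ k) (σ k) := by
  unfold Vf
  simp only [Matrix.mul_sum, Matrix.sum_mul, trace_sum, Matrix.mul_smul, Matrix.smul_mul,
    trace_smul, smul_eq_mul, Complex.re_sum, Complex.re_ofReal_mul, Finset.mul_sum,
    ← Finset.sum_sub_distrib]
  refine Finset.sum_congr rfl fun k _ => ?_
  ring

lemma Vf_mono {ρ σ σ' : Matrix n n ℂ} (h : (σ' - σ).PosSemidef) (t : ℝ) (X : Matrix n n ℂ) :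
    Vf t X ρ σ' ≤ Vf t X ρ σ := by
  have h1 := (h.conjTranspose_mul_mul_same X).trace_nonneg
  rw [Matrix.mul_sub, Matrix.sub_mul, trace_sub] at h1
  have h2 := (Complex.le_def.1 h1).1
  simp only [Complex.zero_re, Complex.sub_re] at h2
  unfold Vf
  linarith

lemma diag_re_nonneg {ρ : Matrix n n ℂ} (h : ρ.PosSemidef) (U : Matrix n n ℂ) (j : n) :
    0 ≤ ((Uᴴ * ρ * U) j j).re :=
  (Complex.le_def.1 (h.conjTranspose_mul_mul_same U).diag_nonneg).1

lemma conj_sum_re {ι : Type} [Fintype ι] (p : ι → ℝ) (ω : ι → Matrix n n ℂ) (U : Matrix n n ℂ)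
    (j : n) : ((Uᴴ * (∑ k, (p k : ℂ) • ω k) * U) j j).re
      = ∑ k, p k * ((Uᴴ * ω k * U) j j).re := by
  simp only [Matrix.mul_sum, Matrix.sum_mul, Matrix.mul_smul, Matrix.smul_mul, Matrix.sum_apply,
    Complex.re_sum, Matrix.smul_apply, smul_eq_mul, Complex.re_ofReal_mul]

lemma entropy_mix {ι : Type} [Fintype ι] {p : ι → ℝ} {ω : ι → Matrix n n ℂ}
    (hp : ∀ k, 0 ≤ p k) (h1 : ∑ k, p k = 1) (hω : ∀ k, IsDensity (ω k)) :
    vnEntropy (∑ k, (p k : ℂ) • ω k) ≤ ∑ k, p k * vnEntropy (ω k) + shannon p := by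
  classical
  have hd := isDensity_sum hp h1 hω
  set Ω := ∑ k, (p k : ℂ) • ω k with hΩ
  have dΩ := Diag.of_herm hd.1.1
  set U := (hd.1.1.eigenvectorUnitary : Matrix n n ℂ)
  set s := hd.1.1.eigenvalues
  have hs := dΩ.nonneg hd.1
  have hq : ∀ j, ∑ k, p k * ((Uᴴ * ω k * U) j j).re = s j := by
    intro j
    rw [← conj_sum_re, ← hΩ, dΩ.conj]
    simp
  have hlog2 : 0 < Real.log 2 := Real.log_pos (by norm_num)
  have key : ∀ k, p k * (-(Real.log 2 * vnEntropy (ω k))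
      - ∑ j, ((Uᴴ * ω k * U) j j).re * Real.log (s j)) ≤ -(p k * Real.log (p k)) := by
    intro k
    rcases (hp k).eq_or_lt with h0 | h0
    · simp [← h0]
    have dk := Diag.of_herm (hω k).1.1
    set V := ((hω k).1.1.eigenvectorUnitary : Matrix n n ℂ)
    set r := (hω k).1.1.eigenvalues
    have hr := dk.nonneg (hω k).1
    have dk' : Diag ((p k : ℂ) • ω k) V (fun i => p k * r i) := by
      refine ⟨dk.u1, dk.u2, ?_⟩
      conv_lhs => rw [dk.eq]
      rw [← Matrix.smul_mul, ← Matrix.mul_smul]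
      congr 2
      ext i j
      by_cases h : i = j
      · subst h; simp
      · simp [h]
    obtain ⟨f, hf, hf'⟩ := exists_rep dk dΩ hr hs (by
      intro j hj
      have := hq j
      rw [hj, Finset.sum_eq_zero_iff_of_nonneg
        (fun k _ => mul_nonneg (hp k) (diag_re_nonneg (hω k).1 U j))] at this
      exact (mul_eq_zero.1 (this k (Finset.mem_univ k))).resolve_left h0.ne')
    have hVj : ∀ j, ((Vᴴ * ω k * V) j j).re = r j := by
      intro j; rw [dk.conj]; simp
    obtain ⟨g, hg, hg'⟩ := exists_rep dk dk' hr (fun i => mul_nonneg h0.le (hr i)) (by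
      intro j hj
      rw [hVj]
      exact (mul_eq_zero.1 hj).resolve_left h0.ne')
    have hle := hf.le hg (by
      intro t ht
      obtain ⟨X, hX⟩ := (hf' t ht).2
      rw [← hX]
      refine le_trans (Vf_mono ?_ t X) ((hg' t ht).1 X)
      rw [hΩ, ← Finset.add_sum_erase _ _ (Finset.mem_univ k), add_sub_cancel_left]
      refine posSemidef_sum _ fun i _ => (hω i).1.smul ?_
      exact_mod_cast hp i)
    have hval : ∑ i, r i * Real.log (r i) - ∑ j, ((Vᴴ * ω k * V) j j).re * Real.log (p k * r j)
        = - Real.log (p k) := by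
      rw [← Finset.sum_sub_distrib]
      have : ∀ i, r i * Real.log (r i) - ((Vᴴ * ω k * V) i i).re * Real.log (p k * r i)
          = r i * (- Real.log (p k)) := by
        intro i
        rw [hVj]
        by_cases h : r i = 0
        · simp [h]
        · rw [Real.log_mul h0.ne' h]; ring
      rw [Finset.sum_congr rfl fun i _ => this i, ← Finset.sum_mul, dk.sum_eq_one (hω k), one_mul]
    rw [hval, dk.ent'] at hle
    calc _ ≤ p k * (-Real.log (p k)) := mul_le_mul_of_nonneg_left hle h0.le
      _ = _ := by ring
  have hsum := Finset.sum_le_sum fun k (_ : k ∈ Finset.univ) => key k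
  have e1 : ∑ k, p k * (∑ j, ((Uᴴ * ω k * U) j j).re * Real.log (s j))
      = -(Real.log 2 * vnEntropy Ω) := by
    rw [← dΩ.ent']
    simp only [Finset.mul_sum]
    rw [Finset.sum_comm]
    refine Finset.sum_congr rfl fun j _ => ?_
    rw [← hq j, Finset.sum_mul]
    exact Finset.sum_congr rfl fun k _ => by rw [hq j]; ring
  have e2 : ∑ k, -(p k * Real.log (p k)) = Real.log 2 * shannon p := by
    unfold shannon
    rw [mul_neg, Finset.mul_sum, Finset.sum_neg_distrib]
    congr 1
    refine Finset.sum_congr rfl fun k _ => ?_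
    unfold Real.logb
    field_simp
  have e3 : ∑ k, p k * (-(Real.log 2 * vnEntropy (ω k)))
      = - (Real.log 2 * ∑ k, p k * vnEntropy (ω k)) := by
    rw [Finset.mul_sum, ← Finset.sum_neg_distrib]
    exact Finset.sum_congr rfl fun k _ => by ring
  simp only [mul_sub, Finset.sum_sub_distrib] at hsum
  rw [e1, e2, e3] at hsum
  have : Real.log 2 * vnEntropy Ω ≤ Real.log 2 * (∑ k, p k * vnEntropy (ω k) + shannon p) := by
    linarith
  exact le_of_mul_le_mul_left this hlog2

end

section
variable {A B : Type} [Fintype A] [Fintype B] [DecidableEq A] [DecidableEq B]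

lemma ptraceA_psd_s16 {ρ : Matrix (A × B) (A × B) ℂ} (h : ρ.PosSemidef) : (ptraceA ρ).PosSemidef := by
  have : ptraceA ρ = ∑ a, ρ.submatrix (fun b => (a, b)) (fun b => (a, b)) := by
    ext b b'; simp [ptraceA, Matrix.sum_apply]
  rw [this]
  exact posSemidef_sum _ fun a _ => h.submatrix _

lemma ptraceB_psd_s16 {ρ : Matrix (A × B) (A × B) ℂ} (h : ρ.PosSemidef) : (ptraceB ρ).PosSemidef := by
  have : ptraceB ρ = ∑ b, ρ.submatrix (fun a => (a, b)) (fun a => (a, b)) := by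
    ext b b'; simp [ptraceB, Matrix.sum_apply]
  rw [this]
  exact posSemidef_sum _ fun a _ => h.submatrix _

lemma ptraceA_density {ρ : Matrix (A × B) (A × B) ℂ} (h : IsDensity ρ) : IsDensity (ptraceA ρ) := by
  refine ⟨ptraceA_psd_s16 h.1, ?_⟩
  rw [← h.2]
  simp only [Matrix.trace, ptraceA, diag_apply, of_apply, Fintype.sum_prod_type]
  rw [Finset.sum_comm]

lemma ptraceB_density {ρ : Matrix (A × B) (A × B) ℂ} (h : IsDensity ρ) : IsDensity (ptraceB ρ) := by
  refine ⟨ptraceB_psd_s16 h.1, ?_⟩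
  rw [← h.2]
  simp only [Matrix.trace, ptraceB, diag_apply, of_apply, Fintype.sum_prod_type]

lemma ptraceA_sum {ι : Type} [Fintype ι] (p : ι → ℝ) (ω : ι → Matrix (A × B) (A × B) ℂ) :
    ptraceA (∑ k, (p k : ℂ) • ω k) = ∑ k, (p k : ℂ) • ptraceA (ω k) := by
  ext b b'
  simp only [ptraceA, Matrix.sum_apply, Matrix.smul_apply, of_apply, smul_eq_mul, Finset.mul_sum]
  rw [Finset.sum_comm]

lemma ptraceB_sum {ι : Type} [Fintype ι] (p : ι → ℝ) (ω : ι → Matrix (A × B) (A × B) ℂ) :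
    ptraceB (∑ k, (p k : ℂ) • ω k) = ∑ k, (p k : ℂ) • ptraceB (ω k) := by
  ext b b'
  simp only [ptraceB, Matrix.sum_apply, Matrix.smul_apply, of_apply, smul_eq_mul, Finset.mul_sum]
  rw [Finset.sum_comm]

lemma ptraceA_conj (ρ : Matrix (A × B) (A × B) ℂ) (U : Matrix B B ℂ) :
    ptraceA (((1 : Matrix A A ℂ) ⊗ₖ U)ᴴ * ρ * ((1 : Matrix A A ℂ) ⊗ₖ U)) = Uᴴ * ptraceA ρ * U := by
  ext b b'
  simp only [ptraceA, of_apply, Matrix.mul_apply, Fintype.sum_prod_type, conjTranspose_apply,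
    kroneckerMap_apply, Matrix.one_apply, ite_mul, mul_ite, one_mul, zero_mul, mul_zero,
    Finset.sum_ite_irrel, Finset.sum_const_zero, Finset.sum_ite_eq', Finset.sum_ite_eq,
    Finset.mem_univ, if_true, apply_ite star, star_zero, Finset.sum_mul, Finset.mul_sum]
  rw [Finset.sum_comm]
  refine Finset.sum_congr rfl fun c _ => ?_
  rw [Finset.sum_comm]

lemma cond_rep {ρ : Matrix (A × B) (A × B) ℂ} (h : IsDensity ρ) :
    ∃ f, IsRep f 1 (Real.log 2 * (vnEntropy (ptraceA ρ) - vnEntropy ρ)) ∧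
      ∀ t, 0 ≤ t → (∀ X, Vf t X ρ ((1 : Matrix A A ℂ) ⊗ₖ ptraceA ρ) ≤ f t) ∧
        ∃ X, Vf t X ρ ((1 : Matrix A A ℂ) ⊗ₖ ptraceA ρ) = f t := by
  have dρ := Diag.of_herm h.1.1
  have hB := ptraceA_density h
  have dB := Diag.of_herm hB.1.1
  set U := (hB.1.1.eigenvectorUnitary : Matrix B B ℂ)
  set s := hB.1.1.eigenvalues
  have dσ : Diag ((1 : Matrix A A ℂ) ⊗ₖ ptraceA ρ) ((1 : Matrix A A ℂ) ⊗ₖ U) (fun x => s x.2) := by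
    refine ⟨?_, ?_, ?_⟩
    · rw [conjTranspose_kronecker, ← mul_kronecker_mul, dB.u1]; simp
    · rw [conjTranspose_kronecker, ← mul_kronecker_mul, dB.u2]; simp
    · have : diagonal (fun x : A × B => ((s x.2 : ℝ) : ℂ))
          = (1 : Matrix A A ℂ) ⊗ₖ diagonal (fun b => (s b : ℂ)) := by
        rw [← diagonal_one, diagonal_kronecker_diagonal]; simp
      rw [this, conjTranspose_kronecker, ← mul_kronecker_mul, ← mul_kronecker_mul, ← dB.eq]
      simp
  have hsum : ∀ b, ∑ a, (((((1 : Matrix A A ℂ) ⊗ₖ U)ᴴ * ρ * ((1 : Matrix A A ℂ) ⊗ₖ U)) (a, b) (a, b)).re)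
      = s b := by
    intro b
    have h1 := congrArg Complex.re (congrFun (congrFun (ptraceA_conj ρ U) b) b)
    rw [dB.conj] at h1
    simpa [ptraceA] using h1
  obtain ⟨f, hf, hf'⟩ := exists_rep dρ dσ (dρ.nonneg h.1) (fun x => dB.nonneg hB.1 x.2) (by
    rintro ⟨a, b⟩ hj
    have h2 := hsum b
    simp only at hj
    rw [hj, Finset.sum_eq_zero_iff_of_nonneg (fun a _ => diag_re_nonneg h.1 _ (a, b))] at h2
    exact h2 a (Finset.mem_univ a))
  refine ⟨f, ?_, hf'⟩
  convert hf using 1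
  · exact (dρ.sum_eq_one h).symm
  · rw [dρ.ent', Fintype.sum_prod_type, Finset.sum_comm]
    simp only [← Finset.sum_mul, hsum]
    rw [dB.ent']
    ring

lemma cond_concave {ι : Type} [Fintype ι] {p : ι → ℝ} {ω : ι → Matrix (A × B) (A × B) ℂ}
    (hp : ∀ k, 0 ≤ p k) (h1 : ∑ k, p k = 1) (hω : ∀ k, IsDensity (ω k)) :
    vnEntropy (ptraceA (∑ k, (p k : ℂ) • ω k)) - vnEntropy (∑ k, (p k : ℂ) • ω k)
      ≤ ∑ k, p k * (vnEntropy (ptraceA (ω k)) - vnEntropy (ω k)) := by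
  have hd := isDensity_sum hp h1 hω
  obtain ⟨f, hf, hf'⟩ := cond_rep hd
  choose g hg hg' using fun k => cond_rep (hω k)
  have hG := IsRep.sum Finset.univ fun k _ => (hg k).smul (p k)
  simp only [mul_one] at hG
  rw [h1] at hG
  have hle := hf.le hG (by
    intro t ht
    obtain ⟨X, hX⟩ := (hf' t ht).2
    rw [← hX]
    have : (1 : Matrix A A ℂ) ⊗ₖ ptraceA (∑ k, (p k : ℂ) • ω k)
        = ∑ k, (p k : ℂ) • ((1 : Matrix A A ℂ) ⊗ₖ ptraceA (ω k)) := by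
      rw [ptraceA_sum]
      ext x y
      simp only [kroneckerMap_apply, Matrix.sum_apply, Matrix.smul_apply, smul_eq_mul, Finset.mul_sum]
      exact Finset.sum_congr rfl fun k _ => by ring
    rw [this, Vf_sum]
    exact Finset.sum_le_sum fun k _ => mul_le_mul_of_nonneg_left ((hg' k t ht).1 X) (hp k))
  have hlog2 : 0 < Real.log 2 := Real.log_pos (by norm_num)
  refine le_of_mul_le_mul_left (hle.trans_eq ?_) hlog2
  rw [Finset.mul_sum]
  exact Finset.sum_congr rfl fun k _ => by ring

lemma mutInfo_mix {ι : Type} [Fintype ι] {p : ι → ℝ} {ω : ι → Matrix (A × B) (A × B) ℂ}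
    (hp : ∀ k, 0 ≤ p k) (h1 : ∑ k, p k = 1) (hω : ∀ k, IsDensity (ω k)) :
    mutInfo (∑ k, (p k : ℂ) • ω k) ≤ ∑ k, p k * mutInfo (ω k) + shannon p := by
  have a := cond_concave hp h1 hω
  have b := entropy_mix hp h1 (fun k => ptraceB_density (hω k))
  rw [← ptraceB_sum] at b
  have c : ∑ k, p k * mutInfo (ω k) = ∑ k, p k * vnEntropy (ptraceB (ω k))
      + ∑ k, p k * (vnEntropy (ptraceA (ω k)) - vnEntropy (ω k)) := by
    rw [← Finset.sum_add_distrib]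
    exact Finset.sum_congr rfl fun k _ => by unfold mutInfo; ring
  rw [c]
  unfold mutInfo
  linarith

end
/-- tensor power -/
def tp {A : Type} (n : ℕ) (M : Matrix A A ℂ) : Matrix (Fin n → A) (Fin n → A) ℂ :=
  Matrix.of fun x y => ∏ i, M (x i) (y i)

section
variable {A : Type} [Fintype A] [DecidableEq A]

lemma tp_mul (n : ℕ) (M N : Matrix A A ℂ) : tp n M * tp n N = tp n (M * N) := by
  ext x y
  simp only [tp, Matrix.mul_apply, of_apply, ← Finset.prod_mul_distrib]
  rw [Fintype.prod_sum]

lemma tp_conjTranspose (n : ℕ) (M : Matrix A A ℂ) : (tp n M)ᴴ = tp n Mᴴ := by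
  ext x y
  simp [tp, conjTranspose_apply]

lemma tp_diagonal (n : ℕ) (d : A → ℝ) :
    tp n (diagonal fun a => (d a : ℂ)) = diagonal fun x => ((∏ i, d (x i) : ℝ) : ℂ) := by
  ext x y
  by_cases h : x = y
  · subst h
    simp [tp]
  · rw [diagonal_apply_ne _ h]
    obtain ⟨i, hi⟩ := Function.ne_iff.1 h
    simp only [tp, of_apply]
    exact Finset.prod_eq_zero (Finset.mem_univ i) (diagonal_apply_ne _ hi)

lemma tp_one (n : ℕ) : tp n (1 : Matrix A A ℂ) = 1 := by
  have := tp_diagonal n (fun _ : A => (1 : ℝ))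
  simpa using this

lemma Diag.tp {ρ U : Matrix A A ℂ} {d : A → ℝ} (h : Diag ρ U d) (n : ℕ) :
    Diag (tp n ρ) (tp n U) (fun x => ∏ i, d (x i)) := by
  refine ⟨?_, ?_, ?_⟩
  · rw [tp_conjTranspose, tp_mul, h.u1, tp_one]
  · rw [tp_conjTranspose, tp_mul, h.u2, tp_one]
  · rw [tp_conjTranspose, ← tp_diagonal, tp_mul, tp_mul, ← h.eq]

lemma ent_prod (n : ℕ) (d : A → ℝ) (h1 : ∑ a, d a = 1) :
    ∑ x : Fin n → A, (∏ i, d (x i)) * Real.logb 2 (∏ i, d (x i))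
      = n * ∑ a, d a * Real.logb 2 (d a) := by
  have key : ∀ x : Fin n → A, (∏ i, d (x i)) * Real.logb 2 (∏ i, d (x i))
      = ∑ k, ∏ i, (d (x i) * (if i = k then Real.logb 2 (d (x i)) else 1)) := by
    intro x
    have e : ∀ k, ∏ i, (d (x i) * (if i = k then Real.logb 2 (d (x i)) else 1))
        = (∏ i, d (x i)) * Real.logb 2 (d (x k)) := by
      intro k
      rw [Finset.prod_mul_distrib, Finset.prod_ite_eq']
      simp
    simp only [e]
    rw [← Finset.mul_sum]
    by_cases h0 : ∏ i, d (x i) = 0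
    · simp [h0]
    · congr 1
      rw [Real.logb_prod]
      intro i _ hi
      exact h0 (Finset.prod_eq_zero (Finset.mem_univ i) hi)
  simp only [key]
  rw [Finset.sum_comm]
  have e : ∀ k : Fin n, ∑ x : Fin n → A,
      ∏ i, (d (x i) * (if i = k then Real.logb 2 (d (x i)) else 1))
      = ∑ a, d a * Real.logb 2 (d a) := by
    intro k
    rw [← Fintype.prod_sum (fun i a => d a * (if i = k then Real.logb 2 (d a) else 1))]
    rw [Finset.prod_eq_single k]
    · simp
    · intro i _ hi
      simp [hi, h1]
    · simp
  rw [Finset.sum_congr rfl fun k _ => e k]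
  simp

lemma vnEntropy_tp (n : ℕ) {ρ : Matrix A A ℂ} (h : IsDensity ρ) :
    vnEntropy (tp n ρ) = n * vnEntropy ρ := by
  have d := Diag.of_herm h.1.1
  rw [(d.tp n).ent, d.ent, ent_prod n _ (d.sum_eq_one h)]
  ring

lemma tp_psd (n : ℕ) {ρ : Matrix A A ℂ} (h : ρ.PosSemidef) : (tp n ρ).PosSemidef := by
  have d := Diag.of_herm h.1
  exact (d.tp n).psd fun x => Finset.prod_nonneg fun i _ => d.nonneg h _

lemma vnEntropy_submatrix {n m : Type} [Fintype n] [Fintype m] [DecidableEq n] [DecidableEq m]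
    (e : m ≃ n) {ρ : Matrix n n ℂ} (h : ρ.IsHermitian) :
    vnEntropy (ρ.submatrix e e) = vnEntropy ρ := by
  have d := Diag.of_herm h
  rw [d.ent]
  apply vnEntropy_of_charpoly (h.submatrix e)
  have := charpoly_reindex e.symm ρ
  rw [reindex_apply] at this
  simp only [Equiv.symm_symm] at this
  rw [this, d.charpoly]

end

section
variable {A B : Type} [Fintype A] [Fintype B] [DecidableEq A] [DecidableEq B]

lemma tpow_eq (σ : Matrix (A × B) (A × B) ℂ) (n : ℕ) :
    tpow σ n = (tp n σ).submatrix (Equiv.arrowProdEquivProdArrow (Fin n) (fun _ => A) (fun _ => B)).symm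
      (Equiv.arrowProdEquivProdArrow (Fin n) (fun _ => A) (fun _ => B)).symm := rfl

lemma sum_pair (n : ℕ) (F : Fin n → A → B → ℂ) :
    ∑ f : Fin n → A, ∑ g : Fin n → B, ∏ i, F i (f i) (g i) = ∏ i, ∑ a, ∑ b, F i a b := by
  simp only [Fintype.prod_sum]

lemma ptraceB_tpow (σ : Matrix (A × B) (A × B) ℂ) (n : ℕ) :
    ptraceB (tpow σ n) = tp n (ptraceB σ) := by
  ext x y
  simp only [ptraceB, tpow, tp, of_apply]
  rw [Fintype.prod_sum]

lemma ptraceA_tpow (σ : Matrix (A × B) (A × B) ℂ) (n : ℕ) :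
    ptraceA (tpow σ n) = tp n (ptraceA σ) := by
  ext x y
  simp only [ptraceA, tpow, tp, of_apply]
  rw [Fintype.prod_sum]

lemma mutInfo_tpow {σ : Matrix (A × B) (A × B) ℂ} (h : IsDensity σ) (n : ℕ) :
    mutInfo (tpow σ n) = n * mutInfo σ := by
  unfold mutInfo
  rw [ptraceA_tpow, ptraceB_tpow, vnEntropy_tp n (ptraceA_density h),
    vnEntropy_tp n (ptraceB_density h), tpow_eq, vnEntropy_submatrix _ (tp_psd n h.1).1,
    vnEntropy_tp n h]
  ring

lemma sum_diag {σ : Matrix (A × B) (A × B) ℂ} (h : IsDensity σ) :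
    ∑ a, ∑ b, σ (a, b) (a, b) = 1 := by
  rw [← h.2]
  simp [Matrix.trace, Fintype.sum_prod_type]

lemma tpow_density {σ : Matrix (A × B) (A × B) ℂ} (h : IsDensity σ) (n : ℕ) :
    IsDensity (tpow σ n) := by
  constructor
  · rw [tpow_eq]
    exact (tp_psd n h.1).submatrix _
  · simp only [Matrix.trace, Fintype.sum_prod_type, diag_apply, tpow, of_apply]
    rw [sum_pair n (fun _ a b => σ (a, b) (a, b))]
    simp [sum_diag h]

lemma copyMarginal_tpow {σ : Matrix (A × B) (A × B) ℂ} (h : IsDensity σ) {n : ℕ} (k : Fin n) :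
    copyMarginal (tpow σ n) k = σ := by
  ext x y
  simp only [copyMarginal, of_apply, tpow]
  have key : ∀ (f : Fin n → A) (g : Fin n → B),
      (if f k = x.1 ∧ g k = x.2 then
        ∏ i, σ (f i, g i) (Function.update f k y.1 i, Function.update g k y.2 i) else 0)
      = ∏ i, (if i = k then (if f i = x.1 ∧ g i = x.2 then σ x y else 0)
          else σ (f i, g i) (f i, g i)) := by
    intro f g
    rw [← Finset.mul_prod_erase _ _ (Finset.mem_univ k),
      ← Finset.mul_prod_erase _ _ (Finset.mem_univ k)]
    have e : ∀ i ∈ Finset.univ.erase k,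
        σ (f i, g i) (Function.update f k y.1 i, Function.update g k y.2 i) =
        (if i = k then (if f i = x.1 ∧ g i = x.2 then σ x y else 0)
          else σ (f i, g i) (f i, g i)) := by
      intro i hi
      have hi' := Finset.ne_of_mem_erase hi
      simp [hi']
    rw [Finset.prod_congr rfl e]
    by_cases hc : f k = x.1 ∧ g k = x.2
    · simp [hc]
    · simp [hc]
  simp only [key]
  rw [sum_pair n (fun i a b => if i = k then (if a = x.1 ∧ b = x.2 then σ x y else 0)
          else σ (a, b) (a, b))]
  rw [Finset.prod_eq_single k]
  · simp [ite_and]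
  · intro i _ hi
    simp [hi, sum_diag h]
  · simp

lemma copyMarginal_sum {ι : Type} [Fintype ι] {n : ℕ} (p : ι → ℝ)
    (τ : ι → Matrix ((Fin n → A) × (Fin n → B)) ((Fin n → A) × (Fin n → B)) ℂ) (k : Fin n) :
    copyMarginal (∑ j, (p j : ℂ) • τ j) k = ∑ j, (p j : ℂ) • copyMarginal (τ j) k := by
  ext x y
  simp only [copyMarginal, of_apply, Matrix.sum_apply, Matrix.smul_apply, smul_eq_mul,
    Finset.mul_sum]
  conv_rhs => rw [Finset.sum_comm]
  refine Finset.sum_congr rfl fun f _ => ?_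
  conv_rhs => rw [Finset.sum_comm]
  refine Finset.sum_congr rfl fun g _ => ?_
  split_ifs <;> simp

lemma eig_le_one {n : Type} [Fintype n] [DecidableEq n] {ρ U : Matrix n n ℂ} {d : n → ℝ}
    (h : Diag ρ U d) (hρ : IsDensity ρ) (i : n) : d i ≤ 1 := by
  rw [← h.sum_eq_one hρ]
  exact Finset.single_le_sum (fun j _ => h.nonneg hρ.1 j) (Finset.mem_univ i)

lemma vnEntropy_nonneg {n : Type} [Fintype n] [DecidableEq n] {ρ : Matrix n n ℂ}
    (hρ : IsDensity ρ) : 0 ≤ vnEntropy ρ := by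
  have d := Diag.of_herm hρ.1.1
  rw [d.ent, neg_nonneg]
  refine Finset.sum_nonpos fun i _ => ?_
  exact mul_nonpos_of_nonneg_of_nonpos (d.nonneg hρ.1 i)
    (Real.logb_nonpos (by norm_num) (d.nonneg hρ.1 i) (eig_le_one d hρ i))

lemma vnEntropy_le {n : Type} [Fintype n] [DecidableEq n] {ρ : Matrix n n ℂ}
    (hρ : IsDensity ρ) : vnEntropy ρ ≤ Fintype.card n / Real.log 2 := by
  have d := Diag.of_herm hρ.1.1
  have h2 : 0 < Real.log 2 := Real.log_pos (by norm_num)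
  rw [le_div_iff₀ h2, mul_comm, ← neg_neg (Real.log 2 * _), ← d.ent', ← Finset.sum_neg_distrib]
  rw [← Finset.card_univ, ← nsmul_one (Finset.card _)]
  refine Finset.sum_le_card_nsmul _ _ _ fun i _ => ?_
  generalize hx : hρ.1.1.eigenvalues i = x
  have h0 : 0 ≤ x := hx ▸ d.nonneg hρ.1 i
  rcases h0.eq_or_lt with h0 | h0
  · simp [← h0]
  · have := Real.one_sub_inv_le_log_of_pos h0
    have h3 := mul_le_mul_of_nonneg_left this h0.le
    rw [mul_sub, mul_inv_cancel₀ h0.ne'] at h3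
    linarith

lemma Ib_le {n : ℕ} {ρ : Matrix (A × B) (A × B) ℂ}
    {τ : Matrix ((Fin n → A) × (Fin n → B)) ((Fin n → A) × (Fin n → B)) ℂ}
    (h : IsBroadcast n τ ρ) : Ib n ρ ≤ mutInfo τ := by
  refine csInf_le ⟨-(Fintype.card ((Fin n → A) × (Fin n → B)) / Real.log 2), ?_⟩ ⟨τ, h, rfl⟩
  rintro x ⟨τ', h', rfl⟩
  have a := vnEntropy_nonneg (ptraceA_density h'.1)
  have b := vnEntropy_nonneg (ptraceB_density h'.1)
  have c := vnEntropy_le h'.1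
  unfold mutInfo
  linarith

lemma Ib_bound {ρ : Matrix (A × B) (A × B) ℂ} (m : ℕ) (p : Fin m → ℝ)
    (σ : Fin m → Matrix (A × B) (A × B) ℂ)
    (hp : ∀ k, 0 ≤ p k) (h1 : ∑ k, p k = 1) (hσ : ∀ k, IsDensity (σ k))
    (he : ∑ k, (p k : ℂ) • σ k = ρ) (n : ℕ) :
    Ib n ρ ≤ n * (∑ k, p k * mutInfo (σ k)) + shannon p := by
  have hd := fun k => tpow_density (hσ k) n
  have hb : IsBroadcast n (∑ k, (p k : ℂ) • tpow (σ k) n) ρ := by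
    refine ⟨isDensity_sum hp h1 hd, fun k => ?_⟩
    rw [copyMarginal_sum]
    simp only [copyMarginal_tpow (hσ _)]
    exact he
  refine (Ib_le hb).trans ((mutInfo_mix hp h1 hd).trans_eq ?_)
  congr 1
  rw [Finset.mul_sum]
  refine Finset.sum_congr rfl fun k _ => ?_
  rw [mutInfo_tpow (hσ k)]
  ring

end

/-- for any mixed ensemble of ρ, (I_b)_n(ρ) ≤ n·∑_k p_k I(ρ^k) + S({p_k});
hence I_b^{(∞)}(ρ) ≤ 2E^C_sq(ρ). -/
theorem stmt_16 {A B : Type} [Fintype A] [Fintype B] [DecidableEq A] [DecidableEq B]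
    (ρ : Matrix (A × B) (A × B) ℂ) (hρ : IsDensity ρ) :
    (∀ (m : ℕ) (p : Fin m → ℝ) (σ : Fin m → Matrix (A × B) (A × B) ℂ),
        (∀ k, 0 ≤ p k) → (∑ k, p k = 1) → (∀ k, IsDensity (σ k)) →
        (∑ k, (p k : ℂ) • σ k = ρ) →
        ∀ n : ℕ, 1 ≤ n →
          Ib n ρ ≤ n * (∑ k, p k * mutInfo (σ k)) + shannon p) ∧
    (∀ L : ℝ, Tendsto (fun n : ℕ => Ib n ρ / n) atTop (nhds L) → L ≤ 2 * EsqC ρ) := by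
  refine ⟨fun m p σ hp h1 hσ he n _ => Ib_bound m p σ hp h1 hσ he n, fun L hL => ?_⟩
  unfold EsqC
  rw [← mul_assoc, mul_one_div_cancel (two_ne_zero), one_mul]
  refine le_csInf ⟨_, 1, fun _ => 1, fun _ => ρ, by simp, by simp, fun _ => hρ, by simp, rfl⟩ ?_
  rintro x ⟨m, p, σ, hp, h1, hσ, he, rfl⟩
  have hlim : Tendsto (fun n : ℕ => (∑ k, p k * mutInfo (σ k)) + shannon p / n) atTop
      (nhds ((∑ k, p k * mutInfo (σ k)) + 0)) :=
    (tendsto_const_div_atTop_nhds_zero_nat (shannon p)).const_add _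
  rw [add_zero] at hlim
  refine le_of_tendsto_of_tendsto hL hlim ?_
  filter_upwards [eventually_ge_atTop 1] with n hn
  have hn' : (0 : ℝ) < n := by exact_mod_cast hn
  rw [div_le_iff₀ hn', add_mul, div_mul_cancel₀ _ hn'.ne', mul_comm _ (n : ℝ)]
  exact Ib_bound m p σ hp h1 hσ he n

end
end
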